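/- Let d ≥ 1 and let U be a d×d unitary complex matrix. Set A₁ = i(U − I) and A₂ = U + I. Then for every nonzero real number k, the matrix A₁ − i k A₂ is invertible, and the matrix Θ(k) = (A₁ − i k A₂)⁻¹ (A₁ + i k A₂) is unitary. -/

import Mathlib

/-!
Both claims hold for a unitary `u` of an arbitrary unital C⋆-algebra. Since
`A₁ - i w A₂ = i ((1 - w) u - (1 + w))` and the spectrum of `u` lies on the unit circle, this
element is invertible as soon as `|1 - w| ≠ |1 + w|`, that is, as soon as `Re w ≠ 0`. Moreover
`A₁ A₂*` is self-adjoint, so for real `k` the cross terms in `(A₁ ∓ i k A₂) (A₁ ∓ i k A₂)*` cancel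
and both products equal `A₁ A₁* + k² A₂ A₂*`; this equality is what makes the quotient unitary.
-/

open scoped Ring

theorem isUnit_smul_sub_algebraMap_of_mem_unitary {𝕜 E : Type*} [NormedField 𝕜] [NormedRing E]
    [StarRing E] [CStarRing E] [NormedAlgebra 𝕜 E] [CompleteSpace E] {u : E}
    (hu : u ∈ unitary E) {a b : 𝕜} (hab : ‖a‖ ≠ ‖b‖) :
    IsUnit (a • u - algebraMap 𝕜 E b) := by
  rcases eq_or_ne a 0 with rfl | ha
  · have hb : b ≠ 0 := by simpa [eq_comm] using hab
    simpa using (hb.isUnit.map (algebraMap 𝕜 E)).neg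
  · have ratio_notMem : b / a ∉ spectrum 𝕜 u := fun h ↦ by
      have := spectrum.norm_eq_one_of_unitary hu h
      rw [norm_div, div_eq_one_iff_eq (norm_ne_zero_iff.mpr ha)] at this
      exact hab this.symm
    have factor : a • u - algebraMap 𝕜 E b = -(a • (algebraMap 𝕜 E (b / a) - u)) := by
      simp only [Algebra.algebraMap_eq_smul_one, smul_sub, smul_smul, mul_div_cancel₀ b ha,
        neg_sub]
    rw [factor]
    exact ((spectrum.notMem_iff.mp ratio_notMem).smul (Units.mk0 a ha)).neg

theorem norm_one_sub_ne_norm_one_add_of_re_ne_zero {w : ℂ} (hw : w.re ≠ 0) :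
    ‖1 - w‖ ≠ ‖1 + w‖ := by
  intro h
  have hsq : Complex.normSq (1 - w) = Complex.normSq (1 + w) := by
    rw [← Complex.sq_norm, ← Complex.sq_norm, h]
  rw [Complex.normSq_sub, Complex.normSq_add, map_one, one_mul, Complex.conj_re] at hsq
  exact hw (by linarith)

theorem isUnit_I_smul_sub_one_sub_smul_add_one {A : Type*} [CStarAlgebra A] {u : A}
    (hu : u ∈ unitary A) {w : ℂ} (hw : w.re ≠ 0) :
    IsUnit (Complex.I • (u - 1) - (Complex.I * w) • (u + 1)) := by
  have factor : Complex.I • (u - 1) - (Complex.I * w) • (u + 1) =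
      Complex.I • ((1 - w) • u - algebraMap ℂ A (1 + w)) := by
    rw [Algebra.algebraMap_eq_smul_one]
    module
  rw [factor]
  exact (isUnit_smul_sub_algebraMap_of_mem_unitary hu
    (norm_one_sub_ne_norm_one_add_of_re_ne_zero hw)).smul (Units.mk0 _ Complex.I_ne_zero)

theorem isSelfAdjoint_I_smul_sub_one_mul_star_add_one {A : Type*} [Ring A] [StarRing A]
    [Algebra ℂ A] [StarModule ℂ A] {u : A} (hu : u ∈ unitary A) :
    IsSelfAdjoint (Complex.I • (u - 1) * star (u + 1)) := by
  have expand : Complex.I • (u - 1) * star (u + 1) = Complex.I • (u - star u) := by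
    rw [smul_mul_assoc, star_add, star_one, sub_mul, mul_add, Unitary.mul_star_self_of_mem hu]
    noncomm_ring
  rw [expand, IsSelfAdjoint, star_smul, star_sub, star_star, Complex.star_def, Complex.conj_I,
    neg_smul, ← smul_neg, neg_sub]

theorem sub_smul_mul_star_eq_add_smul_mul_star {R A : Type*} [CommRing R] [StarRing R] [Ring A]
    [StarRing A] [Algebra R A] [StarModule R A] {a b : A} (hab : IsSelfAdjoint (a * star b))
    {c : R} (hc : c ∈ skewAdjoint R) :
    (a - c • b) * star (a - c • b) = (a + c • b) * star (a + c • b) := by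
  have cross_symm : b * star a = a * star b := by simpa using hab.star_eq
  simp only [star_sub, star_add, star_smul, skewAdjoint.mem_iff.mp hc, sub_mul, mul_sub, add_mul,
    mul_add, smul_mul_assoc, mul_smul_comm, cross_symm]
  module

theorem ringInverse_mul_mem_unitary {R : Type*} [MonoidWithZero R] [StarMul R] {a b : R}
    (ha : IsUnit a) (hb : IsUnit b) (hab : a * star a = b * star b) : a⁻¹ʳ * b ∈ unitary R := by
  lift a to Rˣ using ha
  lift b to Rˣ using hb
  rw [Ring.inverse_unit]
  exact (Units.inv_mul_mem_unitary a b).mpr (Units.ext hab)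

theorem theta_unitary_of_real_general {A : Type*} [CStarAlgebra A] {u : A} (hu : u ∈ unitary A)
    {k : ℝ} (hk : k ≠ 0) :
    IsUnit (Complex.I • (u - 1) - (Complex.I * (k : ℂ)) • (u + 1)) ∧
    (Complex.I • (u - 1) - (Complex.I * (k : ℂ)) • (u + 1))⁻¹ʳ *
      (Complex.I • (u - 1) + (Complex.I * (k : ℂ)) • (u + 1)) ∈ unitary A := by
  have isUnit_sub : IsUnit (Complex.I • (u - 1) - (Complex.I * (k : ℂ)) • (u + 1)) :=
    isUnit_I_smul_sub_one_sub_smul_add_one hu (by simpa using hk)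
  have isUnit_add : IsUnit (Complex.I • (u - 1) + (Complex.I * (k : ℂ)) • (u + 1)) := by
    simpa only [mul_neg, neg_smul, sub_neg_eq_add] using
      isUnit_I_smul_sub_one_sub_smul_add_one hu (w := -k) (by simpa using hk)
  have I_mul_ofReal_mem : Complex.I * (k : ℂ) ∈ skewAdjoint ℂ := by
    simp [skewAdjoint.mem_iff]
  exact ⟨isUnit_sub, ringInverse_mul_mem_unitary isUnit_sub isUnit_add
    (sub_smul_mul_star_eq_add_smul_mul_star (isSelfAdjoint_I_smul_sub_one_mul_star_add_one hu)
      I_mul_ofReal_mem)⟩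

/-- For a unitary matrix `U ∈ M_d(ℂ)` with `A₁ = i(U − I)`, `A₂ = U + I`,
for every nonzero real `k` the matrix `A₁ − i k A₂` is invertible and
`Θ(k) = (A₁ − i k A₂)⁻¹ (A₁ + i k A₂)` is unitary. -/
theorem theta_unitary_of_real
    (d : ℕ) (hd : 1 ≤ d)
    (U : Matrix (Fin d) (Fin d) ℂ) (hU : U ∈ Matrix.unitaryGroup (Fin d) ℂ)
    (A₁ A₂ : Matrix (Fin d) (Fin d) ℂ)
    (hA₁ : A₁ = Complex.I • (U - 1)) (hA₂ : A₂ = U + 1)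
    (k : ℝ) (hk : k ≠ 0) :
    IsUnit (A₁ - (Complex.I * (k : ℂ)) • A₂) ∧
    (A₁ - (Complex.I * (k : ℂ)) • A₂)⁻¹ * (A₁ + (Complex.I * (k : ℂ)) • A₂) ∈
      Matrix.unitaryGroup (Fin d) ℂ := by
  subst hA₁ hA₂
  rw [Matrix.nonsing_inv_eq_ringInverse]
  open scoped Matrix.Norms.L2Operator in
  exact theta_unitary_of_real_general hU hk
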